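/- Assume the field k is infinite and n ≥ 2. Let f, g, h be a regular sequence of homogeneous elements of positive degree in R with deg f ≤ deg g ≤ deg h, let a, b ∈ R be homogeneous elements such that g' := a·f + b·g + h is homogeneous of degree deg h, and let f' ∈ (f,g) be a nonzero homogeneous element with deg f' = deg f. Then there exists a homogeneous element h' ∈ (f,g) of degree deg g such that f', h' is a regular sequence, (f',h') = (f,g), and consequently (f', g', h') = (f,g,h). -/

import Mathlib

/-
Common setup: `R = k[x₀,…,xₙ]` is the standard graded polynomial ring
`MvPolynomial (Fin (n+1)) k` over a field `k`.
-/

open CategoryTheory MvPolynomial RingTheory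

noncomputable section

variable {k : Type} [Field k] {n : ℕ}

/-- A homogeneous ideal: one generated by homogeneous elements. -/
def IsHomogeneousIdeal (I : Ideal (MvPolynomial (Fin (n+1)) k)) : Prop :=
  ∃ S : Set (MvPolynomial (Fin (n+1)) k),
    (∀ f ∈ S, ∃ d, MvPolynomial.IsHomogeneous f d) ∧ I = Ideal.span S

/-- The height of an ideal: the infimum of the heights of the primes containing it. -/
def idealHeight (I : Ideal (MvPolynomial (Fin (n+1)) k)) : ℕ∞ :=
  ⨅ (p : PrimeSpectrum (MvPolynomial (Fin (n+1)) k)) (_ : I ≤ p.asIdeal), Order.height p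

/-- A complete intersection ideal: one generated by a regular sequence of homogeneous
elements of positive degree. -/
def IsCI (I : Ideal (MvPolynomial (Fin (n+1)) k)) : Prop :=
  ∃ l : List (MvPolynomial (Fin (n+1)) k),
    (∀ f ∈ l, ∃ d, 0 < d ∧ MvPolynomial.IsHomogeneous f d) ∧
    RingTheory.Sequence.IsRegular (MvPolynomial (Fin (n+1)) k) l ∧
    I = Ideal.span {x | x ∈ l}

/-- Vanishing of `Ext^i_R(R/I, R)`. -/
def extVanishes (I : Ideal (MvPolynomial (Fin (n+1)) k)) (i : ℕ) : Prop :=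
  Subsingleton (((Ext (MvPolynomial (Fin (n+1)) k) (ModuleCat (MvPolynomial (Fin (n+1)) k)) i).obj
    (Opposite.op (ModuleCat.of _ (MvPolynomial (Fin (n+1)) k ⧸ I)))).obj
    (ModuleCat.of _ (MvPolynomial (Fin (n+1)) k)))

/-- `Ext^i_R(R/I, R)` is a cyclic `R`-module. -/
def extCyclic (I : Ideal (MvPolynomial (Fin (n+1)) k)) (i : ℕ) : Prop :=
  ∃ m : (((Ext (MvPolynomial (Fin (n+1)) k) (ModuleCat (MvPolynomial (Fin (n+1)) k)) i).obj
      (Opposite.op (ModuleCat.of _ (MvPolynomial (Fin (n+1)) k ⧸ I)))).obj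
      (ModuleCat.of _ (MvPolynomial (Fin (n+1)) k))),
    Submodule.span (MvPolynomial (Fin (n+1)) k) {m} = ⊤

/-- An arithmetically Gorenstein homogeneous ideal of height three: a proper homogeneous
ideal of height 3 with `Ext^i_R(R/I, R) = 0` for `i ≠ 3` and `Ext^3_R(R/I, R)` cyclic. -/
def IsArithGorHt3 (I : Ideal (MvPolynomial (Fin (n+1)) k)) : Prop :=
  I ≠ ⊤ ∧ IsHomogeneousIdeal I ∧ idealHeight I = 3 ∧
    (∀ i : ℕ, i ≠ 3 → extVanishes I i) ∧ extCyclic I 3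

/-- `μ(I)`: the least cardinality of a subset of `R` generating `I`. -/
def mu (I : Ideal (MvPolynomial (Fin (n+1)) k)) : ℕ :=
  sInf {m : ℕ | ∃ S : Finset (MvPolynomial (Fin (n+1)) k),
    S.card = m ∧ Ideal.span (S : Set (MvPolynomial (Fin (n+1)) k)) = I}

/-- `a_i(I)`: the least integer `d` such that `I` contains a regular sequence of `i`
homogeneous elements each of degree at most `d`. -/
def aDeg (i : ℕ) (I : Ideal (MvPolynomial (Fin (n+1)) k)) : ℕ :=
  sInf {d : ℕ | ∃ l : List (MvPolynomial (Fin (n+1)) k), l.length = i ∧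
    (∀ f ∈ l, f ∈ I) ∧ (∀ f ∈ l, ∃ e ≤ d, MvPolynomial.IsHomogeneous f e) ∧
    RingTheory.Sequence.IsRegular (MvPolynomial (Fin (n+1)) k) l}

/-- A minimal complete intersection inside a height-three homogeneous ideal `I`:
a regular sequence `f₁, f₂, f₃` of homogeneous elements of `I` with `deg fⱼ = a_j(I)`. -/
def IsMinCI (I : Ideal (MvPolynomial (Fin (n+1)) k)) (f₁ f₂ f₃ : MvPolynomial (Fin (n+1)) k) :
    Prop :=
  f₁ ∈ I ∧ f₂ ∈ I ∧ f₃ ∈ I ∧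
  MvPolynomial.IsHomogeneous f₁ (aDeg 1 I) ∧ MvPolynomial.IsHomogeneous f₂ (aDeg 2 I) ∧
  MvPolynomial.IsHomogeneous f₃ (aDeg 3 I) ∧
  RingTheory.Sequence.IsRegular (MvPolynomial (Fin (n+1)) k) [f₁, f₂, f₃]

/-!
Let `R` be graded with `R₀` a field. Comparing components of degree `deg f` in a membership
`f' ∈ (f, g)` gives `f' = c f + e g` with `c, e ∈ R₀`, where `e = 0` unless `deg f = deg g`.
If `c ≠ 0`, then `h' = g` works; otherwise `deg f = deg g`, `f' = e g` with `e ≠ 0`, and `h' = f`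
works. In both cases `f'` replaces one of the two generators by a unit multiple of it plus a
multiple of the other, which preserves the ideal and, by permutability of homogeneous regular
sequences of positive degree, regularity.
-/

section CommRing

open Sequence

variable {S M : Type*} [CommRing S] [AddCommGroup M] [Module S M] {r s t u : S}

lemma span_pair_unit_mul_add_mul (hu : IsUnit u) :
    Ideal.span {u * s + t * r, r} = Ideal.span {s, r} := by
  rw [mul_comm t r, Ideal.span_pair_add_right_mul, Ideal.span_insert,
    Ideal.span_singleton_mul_left_unit hu, ← Ideal.span_insert]

lemma span_insert_add_of_mem_span {T : Set S} {x : S} (hx : x ∈ Ideal.span T) (y : S) :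
    Ideal.span (insert (x + y) T) = Ideal.span (insert y T) := by
  have span_le (z w : S) (h : z ∈ Ideal.span (insert w T)) :
      Ideal.span (insert z T) ≤ Ideal.span (insert w T) :=
    Ideal.span_le.mpr <| Set.insert_subset h <|
      (Set.subset_insert w T).trans Ideal.subset_span
  refine le_antisymm (span_le _ _ ?_) (span_le _ _ ?_)
  · exact Ideal.mem_span_insert.mpr ⟨1, x, hx, by ring⟩
  · exact Ideal.mem_span_insert.mpr ⟨1, -x, neg_mem hx, by ring⟩

lemma isSMulRegular_quotSMulTop_unit_mul_add_mul_iff (hu : IsUnit u) :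
    IsSMulRegular (QuotSMulTop r M) (u * s + t * r) ↔ IsSMulRegular (QuotSMulTop r M) s := by
  have hr (x : QuotSMulTop r M) : r • x = 0 :=
    Module.mem_annihilator.mp (QuotSMulTop.mem_annihilator M r) x
  have hsmul (x : QuotSMulTop r M) : (u * s + t * r) • x = u • s • x := by
    rw [add_smul, mul_smul, mul_smul t, hr, smul_zero, add_zero]
  simp only [isSMulRegular_iff_right_eq_zero_of_smul, hsmul, hu.smul_eq_zero]

lemma isRegular_pair_unit_mul_add_mul_iff (hu : IsUnit u) :
    IsRegular M [r, u * s + t * r] ↔ IsRegular M [r, s] := by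
  have hspan : Ideal.ofList [r, u * s + t * r] = Ideal.ofList [r, s] := by
    simpa [Ideal.ofList_cons, Ideal.span_insert, sup_comm] using
      span_pair_unit_mul_add_mul (r := r) (s := s) (t := t) hu
  simp only [isRegular_iff, isWeaklyRegular_cons_iff M r, isWeaklyRegular_singleton_iff,
    isSMulRegular_quotSMulTop_unit_mul_add_mul_iff hu, hspan]

lemma isRegular_of_isRegular_append {rs₁ rs₂ : List S} (hreg : IsRegular M (rs₁ ++ rs₂)) :
    IsRegular M rs₁ := by
  refine ⟨((isWeaklyRegular_append_iff M rs₁ rs₂).mp hreg.toIsWeaklyRegular).1,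
    fun htop ↦ hreg.top_ne_smul (top_le_iff.mp ?_).symm⟩
  rw [Ideal.ofList_append, Submodule.sup_smul, ← htop]
  exact le_sup_left

end CommRing

lemma isUnit_of_isHomogeneous_zero {σ K : Type*} [Field K] {p : MvPolynomial σ K}
    (hp : p.IsHomogeneous 0) (hp0 : p ≠ 0) : IsUnit p := by
  obtain ⟨c, rfl⟩ : ∃ c, C c = p := by
    simpa [Submodule.mem_one] using (homogeneousSubmodule_zero (R := K) (σ := σ)).le hp
  exact (isUnit_iff_ne_zero.mpr (C_ne_zero.mp hp0)).map C

section Graded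

open DirectSum Sequence
open scoped Pointwise

variable {A σ : Type*} [CommRing A] [SetLike σ A] [AddSubmonoidClass σ A] {𝒜 : ℕ → σ}
  [GradedRing 𝒜]

-- Every class in `N` is divisible by all powers of `a`, so each of its components vanishes.
lemma submodule_quotient_eq_bot_of_eq_smul {I : Ideal A} (hI : I.IsHomogeneous 𝒜)
    {a : A} {d : ℕ} (hd : 0 < d) (ha : a ∈ 𝒜 d) {N : Submodule A (A ⧸ I)} (hN : N = a • N) :
    N = ⊥ := by
  have hpow (m : ℕ) : N = a ^ m • N := by
    induction m with
    | zero => simp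
    | succ m ih => rw [pow_succ, mul_smul, ← hN, ← ih]
  refine (Submodule.eq_bot_iff N).mpr fun x hx ↦ ?_
  obtain ⟨y, rfl⟩ := Ideal.Quotient.mk_surjective x
  refine Ideal.Quotient.eq_zero_iff_mem.mpr ((hI.mem_iff 𝒜).mpr fun i ↦ ?_)
  rw [hpow (i + 1)] at hx
  obtain ⟨z, -, hz⟩ := (Submodule.mem_smul_pointwise_iff_exists _ _ _).mp hx
  obtain ⟨w, rfl⟩ := Ideal.Quotient.mk_surjective z
  have hyw : y - a ^ (i + 1) * w ∈ I := Ideal.Quotient.eq.mp hz.symm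
  have hcomp : (decompose 𝒜 (a ^ (i + 1) * w) i : A) = 0 :=
    coe_decompose_mul_of_left_mem_of_not_le 𝒜 (SetLike.pow_mem_graded (i + 1) ha)
      (not_le.mpr (Nat.le_mul_of_pos_right (i + 1) hd))
  rw [← sub_add_cancel y (a ^ (i + 1) * w), decompose_add, DirectSum.add_apply,
    AddMemClass.coe_add, hcomp, add_zero]
  exact hI i hyw

lemma isWeaklyRegular_of_perm_of_homogeneous_of_pos {rs rs' : List A} (hrs : IsWeaklyRegular A rs)
    (hperm : rs.Perm rs') (hhom : ∀ r ∈ rs, ∃ d, 0 < d ∧ r ∈ 𝒜 d) : IsWeaklyRegular A rs' := by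
  refine hrs.prototype_perm hperm fun a b l hl ↦ ?_
  obtain ⟨d, hd, ha⟩ := hhom a (hl.subset List.mem_cons_self)
  have hI : (Ideal.ofList l • ⊤ : Ideal A).IsHomogeneous 𝒜 := by
    rw [smul_eq_mul, Ideal.mul_top]
    refine Ideal.homogeneous_span 𝒜 _ fun r hr ↦ ?_
    obtain ⟨i, -, hi⟩ := hhom r (hl.subset (List.mem_cons_of_mem _ (List.mem_cons_of_mem _ hr)))
    exact ⟨i, hi⟩
  exact submodule_quotient_eq_bot_of_eq_smul hI hd ha

lemma isRegular_of_perm_of_homogeneous_of_pos {rs rs' : List A} (hrs : IsRegular A rs)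
    (hperm : rs.Perm rs') (hhom : ∀ r ∈ rs, ∃ d, 0 < d ∧ r ∈ 𝒜 d) : IsRegular A rs' := by
  refine ⟨isWeaklyRegular_of_perm_of_homogeneous_of_pos hrs.toIsWeaklyRegular hperm hhom, ?_⟩
  have hspan : Ideal.ofList rs' = Ideal.ofList rs :=
    congrArg Ideal.span (Set.ext fun _ ↦ hperm.mem_iff.symm)
  exact hspan ▸ hrs.top_ne_smul

lemma isRegular_pair_swap_of_homogeneous_of_pos {r s : A} {i j : ℕ} (hi : 0 < i) (hj : 0 < j)
    (hr : r ∈ 𝒜 i) (hs : s ∈ 𝒜 j) (hrs : IsRegular A [r, s]) : IsRegular A [s, r] := by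
  refine isRegular_of_perm_of_homogeneous_of_pos (𝒜 := 𝒜) hrs (.swap s r []) ?_
  simp only [List.forall_mem_cons]
  exact ⟨⟨i, hi, hr⟩, ⟨j, hj, hs⟩, by simp⟩

lemma exists_eq_mul_add_mul_of_mem_span_pair {f g x : A} {i j : ℕ} (hij : i ≤ j)
    (hf : f ∈ 𝒜 i) (hg : g ∈ 𝒜 j) (hx : x ∈ 𝒜 i) (hxfg : x ∈ Ideal.span {f, g}) :
    ∃ c ∈ 𝒜 0, ∃ e ∈ 𝒜 0, x = c * f + e * g ∧ (e ≠ 0 → i = j) := by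
  obtain ⟨p, q, rfl⟩ := Ideal.mem_span_pair.mp hxfg
  have hcomp : p * f + q * g = decompose 𝒜 p 0 * f + decompose 𝒜 (q * g) i := by
    conv_lhs => rw [← decompose_of_mem_same 𝒜 hx]
    rw [decompose_add, DirectSum.add_apply, AddMemClass.coe_add,
      coe_decompose_mul_of_right_mem_of_le 𝒜 hf le_rfl, Nat.sub_self]
  rcases hij.eq_or_lt with rfl | hlt
  · refine ⟨_, SetLike.coe_mem (decompose 𝒜 p 0), _, SetLike.coe_mem (decompose 𝒜 q 0), ?_,
      fun _ ↦ rfl⟩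
    rw [hcomp, coe_decompose_mul_of_right_mem_of_le 𝒜 hg le_rfl, Nat.sub_self]
  · refine ⟨_, SetLike.coe_mem (decompose 𝒜 p 0), 0, zero_mem _, ?_, fun h ↦ absurd rfl h⟩
    rw [hcomp, coe_decompose_mul_of_right_mem_of_not_le 𝒜 hg hlt.not_ge, zero_mul]

theorem exists_isRegular_pair_span_eq (hunit : ∀ c ∈ 𝒜 0, c ≠ 0 → IsUnit c)
    {f g f' : A} {df dg : ℕ} (hdf : 0 < df) (hfg : df ≤ dg) (hf : f ∈ 𝒜 df) (hg : g ∈ 𝒜 dg)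
    (hreg : IsRegular A [f, g]) (hf'mem : f' ∈ Ideal.span {f, g}) (hf'0 : f' ≠ 0)
    (hf' : f' ∈ 𝒜 df) :
    ∃ h' ∈ 𝒜 dg, IsRegular A [f', h'] ∧ Ideal.span {f', h'} = Ideal.span {f, g} := by
  have hdg : 0 < dg := hdf.trans_le hfg
  obtain ⟨c, hc, e, he, rfl, hdeg⟩ :=
    exists_eq_mul_add_mul_of_mem_span_pair hfg hf hg hf' hf'mem
  by_cases hc0 : c = 0
  · have he0 : e ≠ 0 := by
      rintro rfl
      exact hf'0 (by simp [hc0])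
    have hu : IsUnit e := hunit e he he0
    obtain rfl := hdeg he0
    rw [add_comm (c * f)] at hf' ⊢
    exact ⟨f, hf, isRegular_pair_swap_of_homogeneous_of_pos hdf hdf hf hf'
      ((isRegular_pair_unit_mul_add_mul_iff hu).mpr hreg),
      (span_pair_unit_mul_add_mul hu).trans Ideal.span_pair_comm⟩
  · have hu : IsUnit c := hunit c hc hc0
    exact ⟨g, hg, isRegular_pair_swap_of_homogeneous_of_pos hdg hdf hg hf'
      ((isRegular_pair_unit_mul_add_mul_iff hu).mpr
        (isRegular_pair_swap_of_homogeneous_of_pos hdf hdg hf hg hreg)),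
      span_pair_unit_mul_add_mul hu⟩

theorem stmt_12_general (hunit : ∀ c ∈ 𝒜 0, c ≠ 0 → IsUnit c)
    {f g f' : A} (h a b : A) {df dg : ℕ} (hdf : 0 < df) (hfg : df ≤ dg)
    (hf : f ∈ 𝒜 df) (hg : g ∈ 𝒜 dg) (hreg : IsRegular A [f, g])
    (hf'mem : f' ∈ Ideal.span {f, g}) (hf'0 : f' ≠ 0) (hf' : f' ∈ 𝒜 df) :
    ∃ h' ∈ Ideal.span {f, g}, h' ∈ 𝒜 dg ∧ IsRegular A [f', h'] ∧
      Ideal.span {f', h'} = Ideal.span {f, g} ∧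
      Ideal.span {f', a * f + b * g + h, h'} = Ideal.span {f, g, h} := by
  obtain ⟨h', hh', hreg', hspan⟩ :=
    exists_isRegular_pair_span_eq hunit hdf hfg hf hg hreg hf'mem hf'0 hf'
  refine ⟨h', hspan ▸ Ideal.mem_span_pair.mpr ⟨0, 1, by simp⟩, hh', hreg', hspan, ?_⟩
  have hmem : a * f + b * g ∈ Ideal.span {f', h'} := hspan ▸ Ideal.mem_span_pair.mpr ⟨a, b, rfl⟩
  calc Ideal.span {f', a * f + b * g + h, h'}
      = Ideal.span (insert h {f', h'}) := by
        rw [Set.insert_comm, span_insert_add_of_mem_span hmem]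
    _ = Ideal.span (insert h {f, g}) := by rw [Ideal.span_insert, hspan, ← Ideal.span_insert]
    _ = Ideal.span {f, g, h} := by rw [Set.insert_comm, Set.pair_comm h g]

end Graded

/-- Case 2 in the proof of the main theorem: if `g' = a·f + b·g + h` is homogeneous of
degree `deg h` and `f' ∈ (f,g)` is nonzero homogeneous of degree `deg f`, then there is
`h' ∈ (f,g)` of degree `deg g` with `f', h'` a regular sequence, `(f',h') = (f,g)`, and
consequently `(f', g', h') = (f,g,h)`. -/
theorem stmt_12 [Infinite k] (hn : 2 ≤ n)
    (f g h a b f' : MvPolynomial (Fin (n+1)) k) (df dg dh : ℕ)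
    (hdf : 0 < df) (hdg : 0 < dg) (hdh : 0 < dh)
    (hfg : df ≤ dg) (hgh : dg ≤ dh)
    (hfhom : MvPolynomial.IsHomogeneous f df) (hghom : MvPolynomial.IsHomogeneous g dg)
    (hhhom : MvPolynomial.IsHomogeneous h dh)
    (hreg : RingTheory.Sequence.IsRegular (MvPolynomial (Fin (n+1)) k) [f, g, h])
    (hahom : ∃ da, MvPolynomial.IsHomogeneous a da)
    (hbhom : ∃ db, MvPolynomial.IsHomogeneous b db)
    (hg'hom : MvPolynomial.IsHomogeneous (a * f + b * g + h) dh)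
    (hf'mem : f' ∈ (Ideal.span {f, g} : Ideal (MvPolynomial (Fin (n+1)) k))) (hf'0 : f' ≠ 0)
    (hfhom' : MvPolynomial.IsHomogeneous f' df) :
    ∃ h' ∈ (Ideal.span {f, g} : Ideal (MvPolynomial (Fin (n+1)) k)),
      MvPolynomial.IsHomogeneous h' dg ∧
      RingTheory.Sequence.IsRegular (MvPolynomial (Fin (n+1)) k) [f', h'] ∧
      Ideal.span {f', h'} = (Ideal.span {f, g} : Ideal (MvPolynomial (Fin (n+1)) k)) ∧
      Ideal.span {f', a * f + b * g + h, h'} =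
        (Ideal.span {f, g, h} : Ideal (MvPolynomial (Fin (n+1)) k)) := by
  let := gradedAlgebra (σ := Fin (n + 1)) (R := k)
  exact stmt_12_general (𝒜 := homogeneousSubmodule _ k) (fun _ ↦ isUnit_of_isHomogeneous_zero)
    h a b hdf hfg hfhom hghom (isRegular_of_isRegular_append hreg) hf'mem hf'0 hfhom'

end
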